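/- arXiv:2109.02101 — 2 statements merged into one kernel-verified Lean document; each statement's English description precedes it below -/
import Mathlib

section
/- Let D be a k-module, (D_1, D_2, D_3, …) a sequence of k-submodules of D, and δ : D → D ⊗ D a k-linear map. Let e : D → D and f : D → D be k-linear maps such that Ker δ ⊆ Ker(e − f), (f ⊗ f) ∘ δ = δ ∘ f, (e ⊗ e) ∘ δ = δ ∘ e, and f ∘ e = e ∘ f. Let p be a positive integer such that (e − f)(D_1 + D_2 + ⋯ + D_p) = 0, and assume that δ(D_n) ⊆ Σ_{i=1}^{n−1} D_i ⊗ D_{n−i} for each n > p. Then for any integer u > p, we have (e − f)^{u−p}(D_u) ⊆ Ker δ, where powers denote composition powers. -/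
/-!
Put `g = e - f`. Since `e` and `f` are both compatible with `δ`, one has `δ ∘ g = (A + B) ∘ δ` with
`A = g ⊗ e` and `B = f ⊗ g`, because `e ⊗ e - f ⊗ f = g ⊗ e + f ⊗ g`. As `e`, `f` commute, so do
`A` and `B`, and the binomial theorem expands `δ ∘ g ^ m` into multiples of
`A ^ i B ^ j = (f ^ j g ^ i) ⊗ (e ^ i g ^ j)` with `i + j = m`, applied after `δ`.

By strong induction on `n ≥ 1`, the power `g ^ (n - p + 1)` (truncated subtraction) kills `D_n`. For
`n ≤ p` this is the vanishing of `g` on `D_1 + ⋯ + D_p`. For `n > p`, take `m = n - p`: on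
`D_a ⊗ D_b` with `a + b = n`, every term `A ^ i B ^ j` vanishes, since `i ≤ a - p` and `j ≤ b - p`
cannot both hold when `i + j = n - p` (`pow_map_add_map_tmul_eq_zero`). Hence `g ^ (n - p)` sends
`D_n` into `Ker δ` (`map_pow_sub_eq_zero`), which lies in `Ker g`.
-/

open TensorProduct

/-- The image of `A ⊗ B` under the canonical map `A ⊗ B → D ⊗ D` obtained by tensoring
the inclusion maps. -/
noncomputable def tmulImage {k D : Type*} [CommRing k] [AddCommGroup D] [Module k D]
    (A B : Submodule k D) : Submodule k (D ⊗[k] D) :=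
  LinearMap.range (TensorProduct.mapIncl A B)

/-- If `g ^ (a - p + 1)` kills `x` and `g ^ (b - p + 1)` kills `y`, then in each binomial term
`(f ^ j g ^ i) x ⊗ (e ^ i g ^ j) y` of the expansion, `i + j = a + b - p`, one of the two factors is
zero. -/
theorem pow_map_add_map_tmul_eq_zero {k D : Type*} [CommRing k] [AddCommGroup D] [Module k D]
    (e f g : Module.End k D) (hge : Commute g e) (hgf : Commute g f)
    (p a b : ℕ) (hp : 0 < p) (ha : 0 < a) (hb : 0 < b) (hab : p < a + b) (x y : D)
    (hx : (g ^ (a - p + 1)) x = 0) (hy : (g ^ (b - p + 1)) y = 0) :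
    ((TensorProduct.map g e + TensorProduct.map f g : Module.End k (D ⊗[k] D)) ^ (a + b - p))
      (x ⊗ₜ[k] y) = 0 := by
  have hAB : Commute (TensorProduct.map g e : Module.End k (D ⊗[k] D))
      (TensorProduct.map f g) := by
    change _ * _ = _ * _
    rw [← TensorProduct.map_mul, ← TensorProduct.map_mul, hgf.eq, hge.eq]
  have hzero : ∀ (z : D) (s t : ℕ), s ≤ t → (g ^ s) z = 0 → (g ^ t) z = 0 := by
    intro z s t hst hz
    obtain ⟨r, rfl⟩ := Nat.exists_eq_add_of_le' hst
    rw [pow_add, Module.End.mul_apply, hz, map_zero]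
  rw [hAB.add_pow, LinearMap.sum_apply]
  refine Finset.sum_eq_zero fun i hi => ?_
  have hi' : i ≤ a + b - p := by simpa [Nat.lt_succ_iff] using hi
  rw [← (Nat.cast_commute _ _).eq, Module.End.mul_apply, TensorProduct.map_pow,
    TensorProduct.map_pow, ← TensorProduct.map_mul, (hgf.pow_pow _ _).eq, TensorProduct.map_tmul,
    Module.End.mul_apply, Module.End.mul_apply]
  rcases Nat.lt_or_ge (a - p) i with h | h
  · rw [hzero x _ i h hx, map_zero, zero_tmul, map_zero]
  · rw [hzero y _ (a + b - p - i) (by omega) hy, map_zero, tmul_zero, map_zero]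

/-- The inductive step: if `g ^ (n - p + 1)` kills `D_n` for all `1 ≤ n < u`, then `g ^ (u - p)`
maps `D_u` into `Ker δ`. -/
theorem map_pow_sub_eq_zero {k D : Type*} [CommRing k] [AddCommGroup D] [Module k D]
    (Dn : ℕ → Submodule k D) (δ : D →ₗ[k] D ⊗[k] D) (e f g : Module.End k D)
    (hge : Commute g e) (hgf : Commute g f)
    (hδ : ∀ z, δ (g z) =
      (TensorProduct.map g e + TensorProduct.map f g : Module.End k (D ⊗[k] D)) (δ z))
    (p u : ℕ) (hp : 0 < p) (hu : p < u)
    (hgr : Submodule.map δ (Dn u) ≤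
      ∑ i ∈ Finset.Icc 1 (u - 1), tmulImage (Dn i) (Dn (u - i)))
    (ih : ∀ n < u, 0 < n → ∀ x ∈ Dn n, (g ^ (n - p + 1)) x = 0)
    (x : D) (hx : x ∈ Dn u) : δ ((g ^ (u - p)) x) = 0 := by
  have hpow : ∀ (m : ℕ) (z : D), δ ((g ^ m) z) =
      ((TensorProduct.map g e + TensorProduct.map f g : Module.End k (D ⊗[k] D)) ^ m) (δ z) := by
    intro m
    induction m with
    | zero => intro z; simp
    | succ m h =>
      intro z
      rw [pow_succ, Module.End.mul_apply, h, hδ, pow_succ, Module.End.mul_apply]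
  have hle : ∑ i ∈ Finset.Icc 1 (u - 1), tmulImage (Dn i) (Dn (u - i)) ≤
      LinearMap.ker ((TensorProduct.map g e + TensorProduct.map f g :
        Module.End k (D ⊗[k] D)) ^ (u - p)) := by
    refine Finset.sum_induction _ (fun S => S ≤ _) (fun _ _ h h' => sup_le h h') bot_le ?_
    intro i hi
    rw [Finset.mem_Icc] at hi
    rintro _ ⟨t, rfl⟩
    rw [LinearMap.mem_ker]
    induction t with
    | zero => simp
    | add s t hs ht => rw [map_add, map_add, hs, ht, add_zero]
    | tmul y z =>
      have h := pow_map_add_map_tmul_eq_zero e f g hge hgf p i (u - i) hp (by omega)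
        (by omega) (by omega) y z (ih i (by omega) (by omega) y y.2)
        (ih (u - i) (by omega) (by omega) z z.2)
      rw [show i + (u - i) = u by omega] at h
      exact h
  rw [hpow]
  exact hle (hgr (Submodule.mem_map_of_mem hx))

theorem stmt_0 {k D : Type*} [CommRing k] [AddCommGroup D] [Module k D]
    (Dn : ℕ → Submodule k D)
    (δ : D →ₗ[k] D ⊗[k] D)
    (e f : Module.End k D)
    (hKer : LinearMap.ker δ ≤ LinearMap.ker (e - f))
    (hf : TensorProduct.map (f : D →ₗ[k] D) (f : D →ₗ[k] D) ∘ₗ δ = δ ∘ₗ (f : D →ₗ[k] D))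
    (he : TensorProduct.map (e : D →ₗ[k] D) (e : D →ₗ[k] D) ∘ₗ δ = δ ∘ₗ (e : D →ₗ[k] D))
    (hcomm : f * e = e * f)
    (p : ℕ) (hp : 0 < p)
    (hann : Submodule.map ((e - f : Module.End k D) : D →ₗ[k] D)
      (∑ i ∈ Finset.Icc 1 p, Dn i) = ⊥)
    (hgr : ∀ n : ℕ, n > p →
      Submodule.map δ (Dn n) ≤ ∑ i ∈ Finset.Icc 1 (n - 1), tmulImage (Dn i) (Dn (n - i)))
    (u : ℕ) (hu : u > p) :
    Submodule.map (((e - f) ^ (u - p) : Module.End k D) : D →ₗ[k] D) (Dn u)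
      ≤ LinearMap.ker δ := by
  have hfe : Commute f e := hcomm
  have hge : Commute (e - f) e := (Commute.refl e).sub_left hfe
  have hgf : Commute (e - f) f := hfe.symm.sub_left (Commute.refl f)
  have hδ : ∀ z, δ ((e - f) z) = (TensorProduct.map (e - f) e + TensorProduct.map f (e - f) :
      Module.End k (D ⊗[k] D)) (δ z) := by
    intro z
    have h1 := LinearMap.congr_fun he z
    have h2 := LinearMap.congr_fun hf z
    simp only [LinearMap.comp_apply] at h1 h2
    have hdiff : (TensorProduct.map (e - f) e + TensorProduct.map f (e - f) :
        Module.End k (D ⊗[k] D)) = TensorProduct.map e e - TensorProduct.map f f := by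
      ext x y
      simp [TensorProduct.sub_tmul, TensorProduct.tmul_sub]
    rw [hdiff, LinearMap.sub_apply, LinearMap.sub_apply, map_sub, h1, h2]
  have hkill : ∀ n, 0 < n → ∀ x ∈ Dn n, ((e - f) ^ (n - p + 1)) x = 0 := by
    intro n
    induction n using Nat.strong_induction_on with
    | _ n ih =>
      intro hn x hx
      rcases Nat.lt_or_ge p n with h | h
      · have h0 := map_pow_sub_eq_zero Dn δ e f (e - f) hge hgf hδ p n hp h (hgr n h) ih x hx
        rw [pow_succ', Module.End.mul_apply]
        exact hKer h0
      · rw [Nat.sub_eq_zero_of_le h, zero_add, pow_one]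
        have hle : Dn n ≤ ∑ i ∈ Finset.Icc 1 p, Dn i :=
          Finset.single_le_sum (f := Dn) (fun _ _ => bot_le) (Finset.mem_Icc.2 ⟨hn, h⟩)
        have hmem := Submodule.mem_map_of_mem (f := ((e - f : Module.End k D) : D →ₗ[k] D)) (hle hx)
        rw [hann] at hmem
        exact (Submodule.mem_bot k).1 hmem
  rintro _ ⟨x, hx, rfl⟩
  exact map_pow_sub_eq_zero Dn δ e f (e - f) hge hgf hδ p u hp hu (hgr u hu)
    (fun n _ => hkill n) x hx
end

section
/- Let D be a k-module, (D_1, D_2, D_3, …) a sequence of k-submodules of D, and δ : D → D ⊗ D a k-linear map. Let e : D → D and f : D → D be k-linear maps such that Ker δ ⊆ Ker(e − f), (f ⊗ f) ∘ δ = δ ∘ f, (e ⊗ e) ∘ δ = δ ∘ e, and f ∘ e = e ∘ f. Let p be a positive integer such that (e − f)(D_1 + D_2 + ⋯ + D_p) = 0, and assume that δ(D_n) ⊆ Σ_{i=1}^{n−1} D_i ⊗ D_{n−i} for each n > p. Then for any integer u > p, we have (e − f)^{u−p+1}(D_u) = 0, where powers denote composition powers. -/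
/-!
Write `g = e - f`. Since `e` and `f` respect `δ`, one has `δ ∘ g = G ∘ δ` with
`G = e ⊗ e - f ⊗ f = g ⊗ e + f ⊗ g`. The two summands commute because `e` and `f` do, so by the
binomial theorem `G ^ m` is a combination of the maps `g ^ j f ^ (m - j) ⊗ e ^ j g ^ (m - j)`.

By strong induction on `n ≥ 1`, `g ^ (n - p + 1)` kills `Dn n` (with truncated subtraction, so that
`n ≤ p` is covered by the hypothesis on `D_1 + ⋯ + D_p`). For `n > p`, a degree count shows that every
binomial term of `G ^ (n - p)` kills every `Dn i ⊗ Dn (n - i)`, `0 < i < n`. Hence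
`δ ∘ g ^ (n - p) = G ^ (n - p) ∘ δ` vanishes on `Dn n`, and `ker δ ≤ ker g` supplies one more `g`.
-/

open TensorProduct

/-- `e ⊗ e - f ⊗ f = (e - f) ⊗ e + f ⊗ (e - f)`, expanded by the binomial theorem on a pure tensor:
if in each term one of the two powers of `e - f` kills its argument, the whole power does. -/
lemma map_sub_map_pow_tmul_eq_zero {k D : Type*} [CommRing k] [AddCommGroup D] [Module k D]
    (e f : Module.End k D) (hcomm : Commute f e) (m : ℕ) (x y : D)
    (h : ∀ j ≤ m, ((e - f) ^ j) x = 0 ∨ ((e - f) ^ (m - j)) y = 0) :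
    ((TensorProduct.map e e - TensorProduct.map f f : Module.End k (D ⊗[k] D)) ^ m)
      (x ⊗ₜ[k] y) = 0 := by
  have hfg : Commute f (e - f) := hcomm.sub_right (Commute.refl f)
  have heg : Commute e (e - f) := (Commute.refl e).sub_right hcomm.symm
  have hG : (TensorProduct.map e e - TensorProduct.map f f : Module.End k (D ⊗[k] D)) =
      TensorProduct.map (e - f) e + TensorProduct.map f (e - f) := by
    ext a b
    simp [TensorProduct.sub_tmul, TensorProduct.tmul_sub]
  have hAB : Commute (TensorProduct.map (e - f) e : Module.End k (D ⊗[k] D))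
      (TensorProduct.map f (e - f)) := by
    change _ * _ = _ * _
    rw [← TensorProduct.map_mul, ← TensorProduct.map_mul, hfg.eq, heg.eq]
  rw [hG, hAB.add_pow, LinearMap.sum_apply]
  refine Finset.sum_eq_zero fun j hj => ?_
  have hj' : j ≤ m := Nat.lt_succ_iff.mp (Finset.mem_range.mp hj)
  rw [TensorProduct.map_pow, TensorProduct.map_pow, ← TensorProduct.map_mul,
    ((hfg.symm).pow_pow j (m - j)).eq, ← (Nat.cast_commute _ _).eq, Module.End.mul_apply,
    TensorProduct.map_tmul, Module.End.mul_apply, Module.End.mul_apply]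
  rcases h j hj' with h | h <;> simp [h]

/-- Sums of submodules are suprema, so it suffices to bound each summand. -/
lemma submodule_sum_le {k M ι : Type*} [CommRing k] [AddCommGroup M] [Module k M]
    (s : Finset ι) (A : ι → Submodule k M) (B : Submodule k M) (h : ∀ i ∈ s, A i ≤ B) :
    ∑ i ∈ s, A i ≤ B :=
  Finset.sum_induction A (· ≤ B) (fun _ _ ha hb => sup_le ha hb) bot_le h

theorem stmt_1 {k D : Type*} [CommRing k] [AddCommGroup D] [Module k D]
    (Dn : ℕ → Submodule k D)
    (δ : D →ₗ[k] D ⊗[k] D)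
    (e f : Module.End k D)
    (hKer : LinearMap.ker δ ≤ LinearMap.ker (e - f))
    (hf : TensorProduct.map (f : D →ₗ[k] D) (f : D →ₗ[k] D) ∘ₗ δ = δ ∘ₗ (f : D →ₗ[k] D))
    (he : TensorProduct.map (e : D →ₗ[k] D) (e : D →ₗ[k] D) ∘ₗ δ = δ ∘ₗ (e : D →ₗ[k] D))
    (hcomm : f * e = e * f)
    (p : ℕ) (hp : 0 < p)
    (hann : Submodule.map ((e - f : Module.End k D) : D →ₗ[k] D)
      (∑ i ∈ Finset.Icc 1 p, Dn i) = ⊥)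
    (hgr : ∀ n : ℕ, n > p →
      Submodule.map δ (Dn n) ≤ ∑ i ∈ Finset.Icc 1 (n - 1), tmulImage (Dn i) (Dn (n - i)))
    (u : ℕ) (hu : u > p) :
    Submodule.map (((e - f) ^ (u - p + 1) : Module.End k D) : D →ₗ[k] D) (Dn u) = ⊥ := by
  have hcomm' : Commute f e := hcomm
  -- `G` is the endomorphism of `D ⊗ D` that `δ` intertwines with `e - f`.
  set G : Module.End k (D ⊗[k] D) := TensorProduct.map e e - TensorProduct.map f f with hG
  have hδ : ∀ (m : ℕ) (x : D), δ (((e - f) ^ m) x) = (G ^ m) (δ x) := by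
    intro m
    induction m with
    | zero => intro x; simp
    | succ m ih =>
      intro x
      have h1 : TensorProduct.map e e (δ x) = δ (e x) := LinearMap.congr_fun he x
      have h2 : TensorProduct.map f f (δ x) = δ (f x) := LinearMap.congr_fun hf x
      rw [pow_succ, pow_succ, Module.End.mul_apply, Module.End.mul_apply, ih, hG,
        LinearMap.sub_apply, LinearMap.sub_apply, h1, h2, map_sub]
  have key : ∀ n : ℕ, 0 < n → ∀ x ∈ Dn n, ((e - f) ^ (n - p + 1)) x = 0 := by
    intro n
    induction n using Nat.strong_induction_on with
    | _ n ih =>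
      intro hn x hx
      rcases le_or_gt n p with hnp | hnp
      · have hle : Dn n ≤ ∑ i ∈ Finset.Icc 1 p, Dn i :=
          Finset.single_le_sum (f := Dn) (fun _ _ => bot_le) (Finset.mem_Icc.mpr ⟨hn, hnp⟩)
        have hx' := Submodule.mem_map_of_mem (f := (e - f : Module.End k D)) (hle hx)
        rw [hann, Submodule.mem_bot] at hx'
        rw [Nat.sub_eq_zero_of_le hnp, zero_add, pow_one]
        exact hx'
      · have hker : ∑ i ∈ Finset.Icc 1 (n - 1), tmulImage (Dn i) (Dn (n - i)) ≤
            LinearMap.ker (G ^ (n - p)) := by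
          refine submodule_sum_le _ _ _ fun i hi => ?_
          obtain ⟨hi1, hi2⟩ := Finset.mem_Icc.mp hi
          rw [tmulImage, LinearMap.range_le_ker_iff]
          refine TensorProduct.ext' fun a b => ?_
          have ha := ih i (by omega) (by omega) a a.2
          have hb := ih (n - i) (by omega) (by omega) b b.2
          refine map_sub_map_pow_tmul_eq_zero e f hcomm' (n - p) a b fun j _ => ?_
          -- Otherwise `j ≤ i - p` and `n - p - j ≤ n - i - p` (truncated), forcing
          -- `n - p ≤ (i - p) + (n - i - p)`, which fails as `0 < i < n` and `0 < p < n`.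
          have hcases : i - p + 1 ≤ j ∨ n - i - p + 1 ≤ n - p - j := by omega
          rcases hcases with h | h
          · exact Or.inl (Module.End.pow_map_zero_of_le h ha)
          · exact Or.inr (Module.End.pow_map_zero_of_le h hb)
        have hz : δ (((e - f) ^ (n - p)) x) = 0 := by
          rw [hδ]
          exact hker (hgr n hnp (Submodule.mem_map_of_mem hx))
        rw [pow_succ', Module.End.mul_apply]
        exact hKer hz
  rw [eq_bot_iff, Submodule.map_le_iff_le_comap]
  exact fun x hx => key u (by omega) x hx
end
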